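/- arXiv:2005.14459 — 2 statements merged into one kernel-verified Lean document; each statement's English description precedes it below -/
import Mathlib

section
/- Local energy lower bound (Lemma 4.1, second part): Let d ≥ 3, a > −(d−2)²/4, and set σ = (d−2)/2 − √((d−2)²/4 + a). There exists a constant C depending only on d and a such that for every R > 0 and every u : ℝ^d → ℝ continuously differentiable on ℝ^d∖{0} with ∫_{|x|<R}(|∇u(x)|² + |x|^{−2}|u(x)|²)dx < ∞, one has ∫_{|x|<R}(|∇u(x)|² + |u(x)|²/|x|²)dx ≤ C ( f(R) + ∫_{|x|=R}(|u(x)|²/|x|) dS(x) ), where f(R) = ∫_{|x|<R}(|∇u(x)|² + a|u(x)|²/|x|²)dx + σ ∫_{|x|=R}(|u(x)|²/|x|) dS(x). -/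
/-!
Put `m = d - 2` and `ν = √(m²/4 + a) > 0`, so that `σ = m/2 - ν`. Write `G = ∫ |∇u|²`,
`H = ∫ u²/|x|²` over the ball of radius `R` and `S = ∫ u²/|x| dS` over its boundary.

For each real `τ`, expanding `∫ |∇u + τ u x/|x|²|² ≥ 0` and integrating the cross term
`2 τ u ∂ᵣu / r` by parts along rays gives `G + τ (τ - m) H + τ S ≥ 0` (`hardy_tau`).
The integration by parts (`radial_identity`) uses polar coordinates (`polar_ball`) and the
fundamental theorem of calculus for `φ(r) = r^m u(rω)²`. It has no contribution from the origin,
because for almost every direction `ω` both `φ'` and `φ(r)/r` are integrable on `(0, R)`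
(`integral_deriv_eq_of_integrable_div`).

Taking `τ = σ + δ` with `δ = min(ν, 1/2)`, one has `τ (τ - m) = a - κ` with
`κ = δ (2ν - δ) > 0`. Hence `E = f(R) + S` satisfies `E ≥ κ H + S/2`, so `H` and `S` are
controlled by `E`, and then so is `G = E - a H - (σ + 1) S`.
-/

noncomputable section

open MeasureTheory Metric

/-- The surface integral `∫_{|x|=R} g dS` over the sphere of radius `R` in `ℝ^d`,
expressed via the surface measure `volume.toSphere` on the unit sphere. -/
def sphereIntegral (d : ℕ) (R : ℝ) (g : EuclideanSpace ℝ (Fin d) → ℝ) : ℝ :=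
  R ^ (d - 1) * ∫ ω : Metric.sphere (0 : EuclideanSpace ℝ (Fin d)) 1,
    g (R • (ω : EuclideanSpace ℝ (Fin d)))
      ∂((volume : Measure (EuclideanSpace ℝ (Fin d))).toSphere)

open Set Filter Topology Measure in
theorem integrable_volumeIoiPow_iff (n : ℕ) (h : ℝ → ℝ) :
    Integrable (fun r : Ioi (0 : ℝ) => h r) (volumeIoiPow n) ↔
      IntegrableOn (fun r => r ^ n * h r) (Ioi 0) := by
  rw [integrableOn_iff_comap_subtypeVal measurableSet_Ioi, Measure.volumeIoiPow,
    integrable_withDensity_iff_integrable_smul', integrable_congr]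
  · refine .of_forall ?_
    rintro ⟨x, hx : 0 < x⟩
    simp (disch := positivity) [ENNReal.toReal_ofReal]
  · fun_prop
  · simp

open Set Filter Topology Measure in
theorem integral_volumeIoiPow (n : ℕ) (h : ℝ → ℝ) :
    ∫ r : Ioi (0 : ℝ), h r ∂(volumeIoiPow n) = ∫ r in Ioi (0 : ℝ), r ^ n * h r := by
  simp only [Measure.volumeIoiPow, ENNReal.ofReal]
  rw [integral_withDensity_eq_integral_smul,
    integral_subtype_comap measurableSet_Ioi fun a ↦ Real.toNNReal (a ^ n) • h a,
    setIntegral_congr_fun measurableSet_Ioi fun x hx ↦ ?_]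
  · rw [NNReal.smul_def, Real.coe_toNNReal _ (pow_nonneg (le_of_lt hx) _), smul_eq_mul]
  · exact (measurable_subtype_coe.pow_const _).real_toNNReal

open Set Filter Topology Measure in
/-- Integration over a ball in polar coordinates, together with the integrability of almost every
radial slice. -/
theorem polar_ball {E : Type*} [NormedAddCommGroup E] [NormedSpace ℝ E] [MeasurableSpace E]
    [BorelSpace E] [FiniteDimensional ℝ E] [Nontrivial E] (μ : Measure E) [μ.IsAddHaarMeasure]
    (F : E → ℝ) (R : ℝ) (hF : IntegrableOn F (ball 0 R) μ) :
    (∀ᵐ ω : sphere (0 : E) 1 ∂μ.toSphere, IntegrableOn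
      (fun r : ℝ => r ^ (Module.finrank ℝ E - 1) * F (r • (ω : E))) (Ioo 0 R)) ∧
    ∫ x in ball (0 : E) R, F x ∂μ = ∫ ω : sphere (0 : E) 1, (∫ r in Ioo (0 : ℝ) R,
      r ^ (Module.finrank ℝ E - 1) * F (r • (ω : E))) ∂μ.toSphere := by
  set n := Module.finrank ℝ E - 1
  set G : E → ℝ := (ball (0 : E) R).indicator F with hG
  have hGi : Integrable G μ := (integrable_indicator_iff measurableSet_ball).2 hF
  set g : sphere (0 : E) 1 × Ioi (0 : ℝ) → ℝ := fun p => G ((p.2 : ℝ) • (p.1 : E)) with hg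
  have hcomp : g ∘ (homeomorphUnitSphereProd E) = fun x : ({0}ᶜ : Set E) => G x := by
    funext x
    have hx : ‖(x : E)‖ ≠ 0 := norm_ne_zero_iff.2 x.2
    simp [hg, smul_smul, hx]
  have hmp := μ.measurePreserving_homeomorphUnitSphereProd
  have hemb := (homeomorphUnitSphereProd E).measurableEmbedding
  have hgi : Integrable g (μ.toSphere.prod (volumeIoiPow n)) := by
    rw [← hmp.integrable_comp_emb hemb, hcomp]
    exact (integrableOn_iff_comap_subtypeVal (measurableSet_singleton _).compl).1 hGi.integrableOn
  have hslice : ∀ ω : sphere (0 : E) 1,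
      EqOn (fun r : ℝ => r ^ n * G (r • (ω : E)))
        ((Ioo 0 R).indicator (fun r : ℝ => r ^ n * F (r • (ω : E)))) (Ioi 0) := by
    intro ω r (hr : 0 < r)
    have hn : ‖r • (ω : E)‖ = r := by simp [norm_smul, abs_of_pos hr]
    by_cases hrR : r < R <;> simp [hG, indicator, hn, hr, hrR]
  have hinter : Ioo (0 : ℝ) R ∩ Ioi 0 = Ioo 0 R := inter_eq_left.2 Ioo_subset_Ioi_self
  constructor
  · filter_upwards [hgi.prod_right_ae] with ω hω
    have h1 := (integrable_volumeIoiPow_iff n fun r => G (r • (ω : E))).1 hω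
    have h2 := (integrableOn_congr_fun (hslice ω) measurableSet_Ioi).1 h1
    rwa [IntegrableOn, integrable_indicator_iff measurableSet_Ioo, IntegrableOn,
      Measure.restrict_restrict measurableSet_Ioo, hinter] at h2
  · calc ∫ x in ball (0 : E) R, F x ∂μ = ∫ x, G x ∂μ := (integral_indicator measurableSet_ball).symm
      _ = ∫ x : ({(0)}ᶜ : Set E), G x ∂(μ.comap (↑)) := by
        rw [integral_subtype_comap (measurableSet_singleton _).compl G, restrict_compl_singleton]
      _ = ∫ p, g p ∂(μ.toSphere.prod (volumeIoiPow n)) := by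
        rw [← hmp.integral_comp hemb g]
        exact integral_congr_ae (.of_forall fun x => (congrFun hcomp x).symm)
      _ = ∫ ω, ∫ r, g (ω, r) ∂(volumeIoiPow n) ∂μ.toSphere := integral_prod _ hgi
      _ = _ := by
        congr 1
        funext ω
        rw [integral_volumeIoiPow n fun r => G (r • (ω : E)),
          setIntegral_congr_fun measurableSet_Ioi (hslice ω), integral_indicator measurableSet_Ioo,
          Measure.restrict_restrict measurableSet_Ioo, hinter]

open Set Filter Topology in
/-- Fundamental theorem of calculus on `(0, R)` without boundary term at `0`: integrability of
`φ'` gives a limit of `φ` at `0`, and integrability of `φ(r)/r` forces this limit to vanish,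
because `1/r` is not integrable at `0`. -/
theorem integral_deriv_eq_of_integrable_div (R : ℝ) (hR : 0 < R) (φ φ' : ℝ → ℝ)
    (hd : ∀ r, 0 < r → HasDerivAt φ (φ' r) r)
    (hi : IntegrableOn φ' (Ioo 0 R)) (hj : IntegrableOn (fun r => φ r / r) (Ioo 0 R)) :
    ∫ r in Ioo 0 R, φ' r = φ R := by
  have hii : IntervalIntegrable φ' volume 0 R :=
    (intervalIntegrable_iff_integrableOn_Ioo_of_le hR.le).2 hi
  rw [← integral_Ioc_eq_integral_Ioo, ← intervalIntegral.integral_of_le hR.le]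
  by_contra hne
  set L := φ R - ∫ r in (0 : ℝ)..R, φ' r with hL
  have hL0 : L ≠ 0 := fun h => hne (by linarith)
  have hφ : ∀ r ∈ Ioo 0 R, φ r = L + ∫ t in (0 : ℝ)..r, φ' t := by
    intro r hr
    have h1 : IntervalIntegrable φ' volume 0 r :=
      hii.mono_set (by rw [uIcc_of_le hr.1.le, uIcc_of_le hR.le]; exact Icc_subset_Icc_right hr.2.le)
    have h2 : IntervalIntegrable φ' volume r R :=
      hii.mono_set (by rw [uIcc_of_le hr.2.le, uIcc_of_le hR.le]; exact Icc_subset_Icc_left hr.1.le)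
    have h3 : ∫ t in r..R, φ' t = φ R - φ r :=
      intervalIntegral.integral_eq_sub_of_hasDerivAt (fun t ht => hd t (by
        rw [uIcc_of_le hr.2.le] at ht; exact hr.1.trans_le ht.1)) h2
    have h4 := intervalIntegral.integral_add_adjacent_intervals h1 h2
    linarith
  have hlim : Tendsto φ (𝓝[>] 0) (𝓝 L) := by
    have hc := intervalIntegral.continuousOn_primitive_interval
      (μ := volume) (f := φ') (a := 0) (b := R) (by
        rw [uIcc_of_le hR.le]; exact (integrableOn_Icc_iff_integrableOn_Ioo (by simp) (by simp)).2 hi)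
    have h0 := (hc 0 (by simp)).mono_left (nhdsWithin_mono 0
      (by rw [uIcc_of_le hR.le]; exact Ioo_subset_Icc_self : Ioo 0 R ⊆ uIcc 0 R))
    rw [nhdsWithin_Ioo_eq_nhdsGT hR] at h0
    have h5 := h0.const_add L
    simp only [intervalIntegral.integral_same, add_zero] at h5
    refine h5.congr' ?_
    filter_upwards [Ioo_mem_nhdsGT hR] with r hr using (hφ r hr).symm
  have hev : ∀ᶠ r in 𝓝[>] (0 : ℝ), |L| / 2 < |φ r| :=
    hlim.abs.eventually_const_lt (by linarith [abs_pos.2 hL0])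
  obtain ⟨ε, hε, hεs⟩ := mem_nhdsGT_iff_exists_Ioo_subset.1 hev
  have hδ : 0 < min ε R := lt_min hε hR
  have hfin : IntegrableOn (fun r : ℝ => r ^ (-1 : ℝ)) (Ioo 0 (min ε R)) := by
    have hj' := (hj.mono_set (Ioo_subset_Ioo_right (min_le_right ε R))).norm.const_mul (2 / |L|)
    refine Integrable.mono' hj' (by fun_prop) ?_
    filter_upwards [ae_restrict_mem measurableSet_Ioo] with r hr
    have hb : |L| / 2 < |φ r| := hεs ⟨hr.1, hr.2.trans_le (min_le_left _ _)⟩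
    have hLp := abs_pos.2 hL0
    rw [Real.rpow_neg_one, norm_inv, norm_div, Real.norm_eq_abs, Real.norm_eq_abs, abs_of_pos hr.1,
      ← mul_div_assoc, inv_eq_one_div]
    refine div_le_div_of_nonneg_right ?_ hr.1.le
    rw [div_mul_eq_mul_div, le_div_iff₀ hLp]
    linarith
  rw [intervalIntegral.integrableOn_Ioo_rpow_iff hδ] at hfin
  exact lt_irrefl _ hfin

open Set Filter Topology in
/-- Integrability of the individual terms of the energy density. -/
theorem energy_parts {d : ℕ} {R : ℝ} {u : EuclideanSpace ℝ (Fin d) → ℝ} (hd : 0 < d)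
    (hu : ContDiffOn ℝ 1 u {x : EuclideanSpace ℝ (Fin d) | x ≠ 0})
    (hI : IntegrableOn (fun x : EuclideanSpace ℝ (Fin d) =>
      ‖gradient u x‖ ^ 2 + (u x) ^ 2 / ‖x‖ ^ 2) (ball 0 R)) :
    IntegrableOn (fun x => ‖gradient u x‖ ^ 2) (ball 0 R) ∧
    IntegrableOn (fun x => (u x) ^ 2 / ‖x‖ ^ 2) (ball 0 R) ∧
    IntegrableOn (fun x => 2 * u x * inner ℝ (gradient u x) x / ‖x‖ ^ 2) (ball 0 R) := by
  have : Nonempty (Fin d) := ⟨⟨0, hd⟩⟩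
  have hopen : IsOpen {x : EuclideanSpace ℝ (Fin d) | x ≠ 0} := isOpen_ne
  have hgrad : ContinuousOn (gradient u) {x : EuclideanSpace ℝ (Fin d) | x ≠ 0} :=
    (InnerProductSpace.toDual ℝ (EuclideanSpace ℝ (Fin d))).symm.continuous.comp_continuousOn
      (hu.continuousOn_fderiv_of_isOpen hopen le_rfl)
  have huc := hu.continuousOn
  have hres : (volume : Measure (EuclideanSpace ℝ (Fin d))).restrict {x | x ≠ 0} = volume :=
    restrict_compl_singleton 0
  have hmeas : ∀ F : EuclideanSpace ℝ (Fin d) → ℝ, ContinuousOn F {x | x ≠ 0} →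
      AEStronglyMeasurable F (volume.restrict (ball 0 R)) := by
    intro F hF
    have h := hF.aestronglyMeasurable (μ := volume) hopen.measurableSet
    rw [hres] at h
    exact h.restrict
  have hn : ∀ x ∈ {x : EuclideanSpace ℝ (Fin d) | x ≠ 0}, ‖x‖ ^ 2 ≠ 0 := fun x hx =>
    pow_ne_zero 2 (norm_ne_zero_iff.2 hx)
  have hnc : ContinuousOn (fun x : EuclideanSpace ℝ (Fin d) => ‖x‖ ^ 2) {x | x ≠ 0} := by fun_prop
  refine ⟨hI.mono' (hmeas _ (hgrad.norm.pow 2)) (.of_forall fun x => ?_),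
    hI.mono' (hmeas _ ((huc.pow 2).div hnc hn)) (.of_forall fun x => ?_),
    hI.mono' (hmeas _ (((continuousOn_const.mul huc).mul (hgrad.inner continuousOn_id)).div
      hnc hn)) (.of_forall fun x => ?_)⟩
  · rw [Real.norm_of_nonneg (by positivity)]
    linarith [show 0 ≤ u x ^ 2 / ‖x‖ ^ 2 by positivity]
  · rw [Real.norm_of_nonneg (by positivity)]
    linarith [sq_nonneg ‖gradient u x‖]
  · rw [norm_div, norm_mul, norm_mul, Real.norm_eq_abs, Real.norm_eq_abs, Real.norm_eq_abs,
      norm_pow, norm_norm, abs_two]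
    rcases eq_or_ne ‖x‖ 0 with h0 | h0
    · simp [h0]
    have h1 : |inner ℝ (gradient u x) x| ≤ ‖gradient u x‖ * ‖x‖ := abs_real_inner_le_norm _ _
    have h2 : 2 * |u x| * |inner ℝ (gradient u x) x| ≤ 2 * |u x| * (‖gradient u x‖ * ‖x‖) :=
      mul_le_mul_of_nonneg_left h1 (by positivity)
    rw [div_le_iff₀ (by positivity), add_mul, div_mul_cancel₀ _ (pow_ne_zero 2 h0), ← sq_abs (u x)]
    nlinarith [sq_nonneg (|u x| - ‖gradient u x‖ * ‖x‖)]

open Set Filter Topology in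
/-- The radial integration by parts: the divergence theorem for the field `u² x / |x|²`, whose
flux through small spheres around the origin tends to zero. -/
theorem radial_identity (k : ℕ) (R : ℝ) (hR : 0 < R) (u : EuclideanSpace ℝ (Fin (k + 3)) → ℝ)
    (hu : ContDiffOn ℝ 1 u {x : EuclideanSpace ℝ (Fin (k + 3)) | x ≠ 0})
    (hI : IntegrableOn (fun x : EuclideanSpace ℝ (Fin (k + 3)) =>
      ‖gradient u x‖ ^ 2 + (u x) ^ 2 / ‖x‖ ^ 2) (ball 0 R)) :
    (∫ x in ball (0 : EuclideanSpace ℝ (Fin (k + 3))) R,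
        2 * u x * inner ℝ (gradient u x) x / ‖x‖ ^ 2)
      + (k + 1) * (∫ x in ball (0 : EuclideanSpace ℝ (Fin (k + 3))) R, (u x) ^ 2 / ‖x‖ ^ 2)
      = sphereIntegral (k + 3) R (fun x => (u x) ^ 2 / ‖x‖) := by
  obtain ⟨-, hH, hB⟩ := energy_parts (by omega) hu hI
  have hF := hB.add (hH.const_mul ((k : ℝ) + 1))
  rw [← integral_const_mul, ← integral_add hB (hH.const_mul _)]
  obtain ⟨hae, heq⟩ := polar_ball volume _ R hF
  obtain ⟨haeH, -⟩ := polar_ball volume _ R hH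
  have hfr : Module.finrank ℝ (EuclideanSpace ℝ (Fin (k + 3))) - 1 = k + 2 := by simp
  rw [hfr] at hae heq haeH
  simp only [Pi.add_apply] at hae heq
  rw [heq, sphereIntegral, ← integral_const_mul]
  refine integral_congr_ae ?_
  filter_upwards [hae, haeH] with ω h1 h2
  have hω : ‖(ω : EuclideanSpace ℝ (Fin (k + 3)))‖ = 1 := by simp
  have hω0 : (ω : EuclideanSpace ℝ (Fin (k + 3))) ≠ 0 := norm_ne_zero_iff.1 (by simp)
  have hnorm : ∀ r : ℝ, 0 < r → ‖r • (ω : EuclideanSpace ℝ (Fin (k + 3)))‖ = r := fun r hr => by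
    rw [norm_smul, hω, Real.norm_of_nonneg hr.le, mul_one]
  have hder : ∀ r : ℝ, 0 < r →
      HasDerivAt (fun r : ℝ => r ^ (k + 1) * u (r • (ω : EuclideanSpace ℝ (Fin (k + 3)))) ^ 2)
        (r ^ (k + 2) * (2 * u (r • ω.1) * inner ℝ (gradient u (r • ω.1)) (r • ω.1)
          / ‖r • ω.1‖ ^ 2 + ((k : ℝ) + 1) * (u (r • ω.1) ^ 2 / ‖r • ω.1‖ ^ 2))) r := by
    intro r hr
    have hdiff : DifferentiableAt ℝ u (r • ω.1) :=
      (hu.contDiffAt (isOpen_ne.mem_nhds (smul_ne_zero hr.ne' hω0))).differentiableAt one_ne_zero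
    have hlin : HasDerivAt (fun r : ℝ => r • ω.1) ω.1 r := by
      simpa using (hasDerivAt_id r).smul_const ω.1
    have hcomp := hdiff.hasGradientAt.hasFDerivAt.comp_hasDerivAt r hlin
    have := (hasDerivAt_pow (k + 1) r).mul (hcomp.pow 2)
    refine this.congr_deriv ?_
    rw [hnorm r hr, inner_smul_right]
    simp only [InnerProductSpace.toDual_apply_apply, Pi.pow_apply, Function.comp_apply]
    field_simp
    push_cast
    ring
  rw [integral_deriv_eq_of_integrable_div R hR _ _ hder h1]
  · simp only [hnorm R hR]
    rw [show k + 3 - 1 = k + 2 by omega]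
    field_simp
    ring
  · refine (integrableOn_congr_fun (fun r hr => ?_) measurableSet_Ioo).1 h2
    have hr0 : r ≠ 0 := hr.1.ne'
    simp only [hnorm r hr.1]
    field_simp
    ring

open Set Filter Topology in
/-- The completed square `∫ |∇u + τ u x / |x|²|² ≥ 0`, with the cross term integrated by parts. -/
theorem hardy_tau (k : ℕ) (R : ℝ) (hR : 0 < R) (u : EuclideanSpace ℝ (Fin (k + 3)) → ℝ)
    (hu : ContDiffOn ℝ 1 u {x : EuclideanSpace ℝ (Fin (k + 3)) | x ≠ 0})
    (hI : IntegrableOn (fun x : EuclideanSpace ℝ (Fin (k + 3)) =>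
      ‖gradient u x‖ ^ 2 + (u x) ^ 2 / ‖x‖ ^ 2) (ball 0 R)) (τ : ℝ) :
    0 ≤ (∫ x in ball (0 : EuclideanSpace ℝ (Fin (k + 3))) R, ‖gradient u x‖ ^ 2)
      + τ * (τ - (k + 1)) *
        (∫ x in ball (0 : EuclideanSpace ℝ (Fin (k + 3))) R, (u x) ^ 2 / ‖x‖ ^ 2)
      + τ * sphereIntegral (k + 3) R (fun x => (u x) ^ 2 / ‖x‖) := by
  rw [← radial_identity k R hR u hu hI]
  obtain ⟨hG, hH, hB⟩ := energy_parts (by omega) hu hI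
  have h : 0 ≤ ∫ x in ball (0 : EuclideanSpace ℝ (Fin (k + 3))) R,
      ((‖gradient u x‖ ^ 2 + τ * (2 * u x * inner ℝ (gradient u x) x / ‖x‖ ^ 2))
        + τ ^ 2 * ((u x) ^ 2 / ‖x‖ ^ 2)) := by
    refine integral_nonneg fun x => ?_
    have hsq := sq_nonneg ‖gradient u x + (τ * u x / ‖x‖ ^ 2) • x‖
    rw [norm_add_sq_real, inner_smul_right, norm_smul, mul_pow, Real.norm_eq_abs, sq_abs] at hsq
    refine hsq.trans_eq ?_
    rcases eq_or_ne ‖x‖ 0 with h0 | h0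
    · simp [h0]
    · field_simp
  have hGB : IntegrableOn (fun x => ‖gradient u x‖ ^ 2
      + τ * (2 * u x * inner ℝ (gradient u x) x / ‖x‖ ^ 2)) (ball 0 R) := hG.add (hB.const_mul τ)
  rw [integral_add hGB (hH.const_mul _),
    integral_add hG (hB.const_mul τ), integral_const_mul, integral_const_mul] at h
  linarith

theorem sphereIntegral_nonneg (d : ℕ) (R : ℝ) (hR : 0 < R) (g : EuclideanSpace ℝ (Fin d) → ℝ)
    (hg : ∀ x, 0 ≤ g x) : 0 ≤ sphereIntegral d R g :=
  mul_nonneg (by positivity) (integral_nonneg fun _ => hg _)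

/-- **Local energy lower bound (Lemma 4.1, second part).** For `d ≥ 3`, `a > −(d−2)²/4`
and `σ = (d−2)/2 − √((d−2)²/4 + a)`, there is a constant `C = C(d,a)` such that for every
`R > 0` and every suitable `u`,
`∫_{|x|<R}(|∇u|² + |u|²/|x|²) ≤ C (f(R) + ∫_{|x|=R}|u|²/|x| dS)`, where
`f(R) = ∫_{|x|<R}(|∇u|² + a|u|²/|x|²) + σ∫_{|x|=R}|u|²/|x| dS`. -/
theorem local_energy_lower_bound (d : ℕ) (hd : 3 ≤ d) (a : ℝ)
    (ha : -((d : ℝ) - 2) ^ 2 / 4 < a)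
    (σ : ℝ) (hσ : σ = ((d : ℝ) - 2) / 2 - Real.sqrt (((d : ℝ) - 2) ^ 2 / 4 + a)) :
    ∃ C : ℝ, 0 < C ∧
      ∀ (R : ℝ), 0 < R →
        ∀ (u : EuclideanSpace ℝ (Fin d) → ℝ),
          ContDiffOn ℝ 1 u {x : EuclideanSpace ℝ (Fin d) | x ≠ 0} →
          IntegrableOn (fun x : EuclideanSpace ℝ (Fin d) =>
            ‖gradient u x‖ ^ 2 + (u x) ^ 2 / ‖x‖ ^ 2) (Metric.ball 0 R) →
          (∫ x in Metric.ball (0 : EuclideanSpace ℝ (Fin d)) R,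
              (‖gradient u x‖ ^ 2 + (u x) ^ 2 / ‖x‖ ^ 2))
            ≤ C * (((∫ x in Metric.ball (0 : EuclideanSpace ℝ (Fin d)) R,
                  (‖gradient u x‖ ^ 2 + a * (u x) ^ 2 / ‖x‖ ^ 2))
                + σ * sphereIntegral d R (fun x => (u x) ^ 2 / ‖x‖))
              + sphereIntegral d R (fun x => (u x) ^ 2 / ‖x‖)) := by
  obtain ⟨k, rfl⟩ : ∃ k, d = k + 3 := ⟨d - 3, by omega⟩
  have hm : ((k + 3 : ℕ) : ℝ) - 2 = k + 1 := by push_cast; ring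
  rw [hm] at ha hσ
  set ν := Real.sqrt (((k : ℝ) + 1) ^ 2 / 4 + a) with hν
  have hpos : 0 < ((k : ℝ) + 1) ^ 2 / 4 + a := by linarith
  have hνpos : 0 < ν := Real.sqrt_pos.2 hpos
  have hνsq : ν ^ 2 = ((k : ℝ) + 1) ^ 2 / 4 + a := Real.sq_sqrt hpos.le
  -- Shift `σ` by `δ`: since `0 < δ < 2ν`, the Hardy coefficient at `σ + δ` is `a - κ` with `κ > 0`,
  -- and `δ ≤ 1/2` leaves at least half of the extra boundary term.
  set δ := min ν (1 / 2) with hδ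
  have hδpos : 0 < δ := lt_min hνpos (by norm_num)
  have hδν : δ ≤ ν := min_le_left _ _
  have hδh : δ ≤ 1 / 2 := min_le_right _ _
  set κ := δ * (2 * ν - δ) with hκ
  have hκpos : 0 < κ := mul_pos hδpos (by linarith)
  refine ⟨1 + (1 + |a|) / κ + 2 * |σ + 1|, by positivity, ?_⟩
  intro R hR u hu hI
  obtain ⟨hG, hH, -⟩ := energy_parts (by omega) hu hI
  have hS : 0 ≤ sphereIntegral (k + 3) R (fun x => (u x) ^ 2 / ‖x‖) :=
    sphereIntegral_nonneg _ R hR _ fun x => by positivity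
  have hHn : 0 ≤ ∫ x in ball (0 : EuclideanSpace ℝ (Fin (k + 3))) R, (u x) ^ 2 / ‖x‖ ^ 2 :=
    integral_nonneg fun x => by positivity
  have hhardy := hardy_tau k R hR u hu hI (σ + δ)
  simp only [mul_div_assoc]
  rw [integral_add hG hH, integral_add hG (hH.const_mul a), integral_const_mul]
  set G := ∫ x in ball (0 : EuclideanSpace ℝ (Fin (k + 3))) R, ‖gradient u x‖ ^ 2
  set H := ∫ x in ball (0 : EuclideanSpace ℝ (Fin (k + 3))) R, (u x) ^ 2 / ‖x‖ ^ 2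
  set S := sphereIntegral (k + 3) R (fun x => (u x) ^ 2 / ‖x‖)
  have hcoef : (σ + δ) * (σ + δ - (k + 1)) = a - κ := by
    rw [hσ, hκ]
    linear_combination hνsq
  rw [hcoef] at hhardy
  set E := G + a * H + σ * S + S with hE
  have hlow : κ * H + 1 / 2 * S ≤ E := by
    have : 0 ≤ (1 / 2 - δ) * S := mul_nonneg (by linarith) hS
    rw [hE]
    linarith
  have hHE : H ≤ E / κ := by
    rw [le_div_iff₀ hκpos]
    linarith
  have hSE : S ≤ 2 * E := by linarith [mul_nonneg hκpos.le hHn]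
  have h1 : -a * H ≤ |a| * (E / κ) :=
    mul_le_mul (neg_le_abs a) hHE hHn (abs_nonneg a)
  have h2 : -(σ + 1) * S ≤ |σ + 1| * (2 * E) :=
    mul_le_mul (neg_le_abs _) hSE hS (abs_nonneg _)
  calc G + H = E + H + -a * H + -(σ + 1) * S := by rw [hE]; ring
    _ ≤ E + E / κ + |a| * (E / κ) + |σ + 1| * (2 * E) := by linarith
    _ = (1 + (1 + |a|) / κ + 2 * |σ + 1|) * E := by ring
end
end

section
/- Lower bound for the inner energy of radial functions (Corollary 4.2): Let d ≥ 3, a > −(d−2)²/4, and set σ = (d−2)/2 − √((d−2)²/4 + a). Then for every R > 0 and every radial function u : ℝ^d → ℝ which is continuously differentiable on ℝ^d∖{0} with ∫_{|x|<R}(|∇u(x)|² + |x|^{−2}|u(x)|²)dx < ∞, one has ∫_{|x|<R}(|∇u(x)|² + a|u(x)|²/|x|²)dx ≥ −c_d σ R^{d−2} |u(R)|² = −(σ/R) ∫_{|x|=R} |u(x)|² dS(x), where c_d is the surface area of the unit sphere in ℝ^d. -/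
noncomputable section

open MeasureTheory Metric

/-- The surface area `c_d` of the unit sphere in `ℝ^d`. -/
def unitSphereArea (d : ℕ) : ℝ :=
  (((volume : Measure (EuclideanSpace ℝ (Fin d))).toSphere) Set.univ).toReal

/-!
The substance is one-dimensional. Put `d = m + 3` and let `f` be the radial profile. Since
`σ ^ 2 = (m + 1) σ + a`, completing the square gives
`r ^ (m + 2) (f' ^ 2 + a f ^ 2 / r ^ 2) = r ^ m (r f' + σ f) ^ 2 - σ (r ^ (m + 1) f ^ 2)'`.
Integrating over `[ε, R]` (`boundary_le_integral`) bounds the energy there below by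
`-σ R ^ (m + 1) f(R) ^ 2 + σ ε ^ (m + 1) f(ε) ^ 2`. The boundary term at `ε` is harmless: the
function `r⁻¹ (r ^ (m + 1) f ^ 2)` is integrable near `0` while `r⁻¹` is not, so
`r ^ (m + 1) f ^ 2` gets arbitrarily small at points tending to `0` (`frequently_radial_lt`), and
this suffices to let `ε → 0` (`radial_bound`).

Polar coordinates (`setIntegral_ball_fun_norm`) transfer the estimate to the ball. Only
`|f'(|x|)| ≤ |∇u(x)|` (`abs_deriv_profile_le`), the easy half of an equality, is needed.
-/

/-- The Hardy-type term being integrable at the origin forces `r ^ (m + 1) * f r ^ 2` to take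
arbitrarily small values near `0`, because `r⁻¹` is not integrable there. -/
lemma frequently_radial_lt (m : ℕ) {f : ℝ → ℝ} {R : ℝ} (hR : 0 < R)
    (h2 : IntegrableOn (fun r => r ^ (m + 2) * (f r ^ 2 / r ^ 2)) (Set.Ioo 0 R))
    {c : ℝ} (hc : 0 < c) :
    ∃ᶠ r in nhdsWithin (0 : ℝ) (Set.Ioi 0), r ^ (m + 1) * f r ^ 2 < c := by
  intro hev
  simp only [not_lt] at hev
  obtain ⟨δ, hδ, hsub⟩ := mem_nhdsGT_iff_exists_Ioo_subset.1 hev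
  have hδ : 0 < δ := hδ
  have hρ : 0 < min δ R := lt_min hδ hR
  have h3 := h2.mono_set (Set.Ioo_subset_Ioo_right (min_le_right δ R))
  have h4 : IntegrableOn (fun r : ℝ => r⁻¹) (Set.Ioo 0 (min δ R)) := by
    refine (h3.const_mul c⁻¹).mono' (by fun_prop) ?_
    refine (ae_restrict_iff' measurableSet_Ioo).2 (.of_forall fun r hr => ?_)
    have hr0 : 0 < r := hr.1
    have h5 : c ≤ r ^ (m + 1) * f r ^ 2 := hsub ⟨hr.1, hr.2.trans_le (min_le_left _ _)⟩
    rw [Real.norm_of_nonneg (by positivity)]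
    have h6 : c⁻¹ * (r ^ (m + 2) * (f r ^ 2 / r ^ 2)) = (c⁻¹ * (r ^ (m + 1) * f r ^ 2)) * r⁻¹ := by
      field_simp
      ring
    rw [h6]
    have h7 : 1 ≤ c⁻¹ * (r ^ (m + 1) * f r ^ 2) := by
      rw [inv_mul_eq_div, one_le_div hc]; exact h5
    exact le_mul_of_one_le_left (by positivity) h7
  have h8 := (intervalIntegrable_iff_integrableOn_Ioo_of_le hρ.le).2 h4
  rw [intervalIntegrable_inv_iff] at h8
  rcases h8 with h | h
  · exact hρ.ne h
  · exact h Set.left_mem_uIcc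

/-- Completing the square on `[ε, R]`, away from the singularity at the origin. -/
lemma boundary_le_integral (m : ℕ) {a σ ε R : ℝ} (hσ : σ ^ 2 = (m + 1) * σ + a)
    (hε : 0 < ε) (hεR : ε ≤ R) {f : ℝ → ℝ} (hf : ContDiffOn ℝ 1 f (Set.Ioi 0)) :
    -σ * (R ^ (m + 1) * f R ^ 2) + σ * (ε ^ (m + 1) * f ε ^ 2) ≤
      ∫ r in ε..R, r ^ (m + 2) * (deriv f r ^ 2 + a * (f r ^ 2 / r ^ 2)) := by
  have hpos : ∀ r ∈ Set.uIcc ε R, 0 < r := fun r hr => by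
    rw [Set.uIcc_of_le hεR] at hr; exact hε.trans_le hr.1
  have hfc : ContinuousOn f (Set.uIcc ε R) := hf.continuousOn.mono hpos
  have hdc : ContinuousOn (deriv f) (Set.uIcc ε R) :=
    (hf.continuousOn_deriv_of_isOpen isOpen_Ioi le_rfl).mono hpos
  have hder : ∀ r ∈ Set.uIcc ε R, HasDerivAt (fun r => -σ * (r ^ (m + 1) * f r ^ 2))
      (-σ * ((m + 1) * r ^ m * f r ^ 2 + r ^ (m + 1) * (2 * f r * deriv f r))) r := fun r hr => by
    have h1 : HasDerivAt f (deriv f r) r :=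
      ((hf.contDiffAt (Ioi_mem_nhds (hpos r hr))).differentiableAt one_ne_zero).hasDerivAt
    refine (((hasDerivAt_pow (m + 1) r).mul (h1.pow 2)).const_mul (-σ)).congr_deriv ?_
    simp
  have hint := ContinuousOn.intervalIntegrable (μ := volume) (a := ε) (b := R)
    (u := fun r => -σ * ((m + 1) * r ^ m * f r ^ 2 + r ^ (m + 1) * (2 * f r * deriv f r)))
    (by fun_prop)
  have hFTC := intervalIntegral.integral_eq_sub_of_hasDerivAt hder hint
  have h0 : -σ * (R ^ (m + 1) * f R ^ 2) + σ * (ε ^ (m + 1) * f ε ^ 2) =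
      -σ * (R ^ (m + 1) * f R ^ 2) - -σ * (ε ^ (m + 1) * f ε ^ 2) := by ring
  rw [h0, ← hFTC]
  refine intervalIntegral.integral_mono_on hεR hint
    (ContinuousOn.intervalIntegrable ?_) fun r hr => ?_
  · have : ∀ r ∈ Set.uIcc ε R, r ^ 2 ≠ 0 := fun r hr => (pow_pos (hpos r hr) 2).ne'
    fun_prop (disch := assumption)
  · have hr0 : 0 < r := hε.trans_le hr.1
    -- The difference of the integrands is a perfect square.
    have hsq : r ^ (m + 2) * (deriv f r ^ 2 + a * (f r ^ 2 / r ^ 2)) -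
        -σ * ((m + 1) * r ^ m * f r ^ 2 + r ^ (m + 1) * (2 * f r * deriv f r)) =
        r ^ m * (r * deriv f r + σ * f r) ^ 2 := by
      have ha : a = σ ^ 2 - (m + 1) * σ := by linarith
      rw [ha]
      field_simp
      ring
    have : 0 ≤ r ^ m * (r * deriv f r + σ * f r) ^ 2 := by positivity
    linarith

/-- The one-dimensional form of the energy bound, obtained from `boundary_le_integral` along
`ε → 0` with the boundary term at `ε` controlled by `frequently_radial_lt`. -/
lemma radial_bound (m : ℕ) {a σ R : ℝ} (hσ : σ ^ 2 = (m + 1) * σ + a) (hR : 0 < R)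
    {f : ℝ → ℝ} (hf : ContDiffOn ℝ 1 f (Set.Ioi 0))
    (h1 : IntegrableOn (fun r => r ^ (m + 2) * deriv f r ^ 2) (Set.Ioo 0 R))
    (h2 : IntegrableOn (fun r => r ^ (m + 2) * (f r ^ 2 / r ^ 2)) (Set.Ioo 0 R)) :
    -σ * (R ^ (m + 1) * f R ^ 2) ≤
      ∫ r in Set.Ioo 0 R, r ^ (m + 2) * (deriv f r ^ 2 + a * (f r ^ 2 / r ^ 2)) := by
  set H : ℝ → ℝ := fun r => r ^ (m + 2) * (deriv f r ^ 2 + a * (f r ^ 2 / r ^ 2)) with hH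
  have hHint : IntegrableOn H (Set.Ioo 0 R) := by
    refine (h1.add (h2.const_mul a)).congr (.of_forall fun r => ?_)
    simp only [hH, Pi.add_apply]
    ring
  have hcont : ContinuousOn (fun x => ∫ t in x..R, H t) (Set.uIcc 0 R) := by
    apply intervalIntegral.continuousOn_primitive_interval_left
    rw [Set.uIcc_of_le hR.le]
    exact (integrableOn_Icc_iff_integrableOn_Ioo).2 hHint
  have hlim : Filter.Tendsto (fun x => ∫ t in x..R, H t) (nhdsWithin 0 (Set.Ioi 0))
      (nhds (∫ t in (0 : ℝ)..R, H t)) := by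
    refine (hcont 0 Set.left_mem_uIcc).mono_left ?_
    rw [Set.uIcc_of_le hR.le]
    exact nhdsWithin_le_of_mem (Icc_mem_nhdsGT hR)
  rw [← integral_Ioc_eq_integral_Ioo, ← intervalIntegral.integral_of_le hR.le]
  refine le_of_forall_pos_sub_le fun η hη => ?_
  have hs : 0 < |σ| + 1 := by positivity
  refine ge_of_tendsto_of_frequently hlim ?_
  refine ((frequently_radial_lt m hR h2 (div_pos hη hs)).and_eventually
    (Ioo_mem_nhdsGT hR)).mono fun ε hε => ?_
  obtain ⟨hlt, hε0, hεR⟩ := hε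
  have hb := boundary_le_integral m hσ hε0 hεR.le hf
  have hF : 0 ≤ ε ^ (m + 1) * f ε ^ 2 := by positivity
  rw [lt_div_iff₀ hs] at hlt
  nlinarith [neg_abs_le σ, mul_le_mul_of_nonneg_right (neg_abs_le σ) hF]

/-- The derivative of the profile is the directional derivative of `u` along `x / ‖x‖`. -/
lemma abs_deriv_profile_le {E : Type*} [NormedAddCommGroup E] [InnerProductSpace ℝ E]
    [CompleteSpace E] {u : E → ℝ} {f : ℝ → ℝ} (hrad : ∀ x, u x = f ‖x‖)
    {x : E} (hx : x ≠ 0) (hu : DifferentiableAt ℝ u x) :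
    |deriv f ‖x‖| ≤ ‖gradient u x‖ := by
  have hn : 0 < ‖x‖ := norm_pos_iff.2 hx
  set ω : E := ‖x‖⁻¹ • x with hω
  have hω1 : ‖ω‖ = 1 := by rw [hω, norm_smul, norm_inv, norm_norm, inv_mul_cancel₀ hn.ne']
  have hxω : ‖x‖ • ω = x := by rw [hω, smul_smul, mul_inv_cancel₀ hn.ne', one_smul]
  have hev : f =ᶠ[nhds ‖x‖] fun s : ℝ => u (s • ω) := by
    filter_upwards [Ioi_mem_nhds hn] with s hs
    rw [hrad, norm_smul, hω1, mul_one, Real.norm_of_nonneg (le_of_lt hs)]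
  have hd : HasDerivAt (fun s : ℝ => u (s • ω)) (fderiv ℝ u x ω) ‖x‖ := by
    have h1 : HasDerivAt (fun s : ℝ => s • ω) ω ‖x‖ := by
      simpa using (hasDerivAt_id ‖x‖).smul_const ω
    have h2 : HasFDerivAt u (fderiv ℝ u x) (‖x‖ • ω) := by rw [hxω]; exact hu.hasFDerivAt
    exact h2.comp_hasDerivAt _ h1
  rw [hev.deriv_eq, hd.deriv, ← inner_gradient_left]
  simpa [hω1] using abs_real_inner_le_norm (gradient u x) ω

/-- On `(0, ∞)` the profile is the restriction of `u` to a ray. -/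
lemma contDiffOn_profile {E : Type*} [NormedAddCommGroup E] [NormedSpace ℝ E]
    {u : E → ℝ} {f : ℝ → ℝ} (hrad : ∀ x, u x = f ‖x‖)
    (hu : ContDiffOn ℝ 1 u {x | x ≠ 0}) {e : E} (he : ‖e‖ = 1) :
    ContDiffOn ℝ 1 f (Set.Ioi 0) := by
  have he0 : e ≠ 0 := by rintro rfl; simp at he
  have h : ContDiffOn ℝ 1 (fun s : ℝ => u (s • e)) (Set.Ioi 0) :=
    hu.comp (t := {x : E | x ≠ 0}) (by fun_prop)
      fun s (hs : 0 < s) => smul_ne_zero hs.ne' he0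
  refine h.congr fun s (hs : 0 < s) => ?_
  rw [hrad, norm_smul, he, mul_one, Real.norm_of_nonneg hs.le]

/-- Polar coordinates on a ball. No integrability is required: if one side fails to be integrable,
so does the other. -/
lemma setIntegral_ball_fun_norm (d : ℕ) (hd : d ≠ 0) (g : ℝ → ℝ) (R : ℝ) :
    ∫ x in ball (0 : EuclideanSpace ℝ (Fin d)) R, g ‖x‖ =
      unitSphereArea d * ∫ r in Set.Ioo 0 R, r ^ (d - 1) * g r := by
  have : Nonempty (Fin d) := Fin.pos_iff_nonempty.1 (Nat.pos_of_ne_zero hd)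
  have h1 : ∫ x in ball (0 : EuclideanSpace ℝ (Fin d)) R, g ‖x‖ =
      ∫ x : EuclideanSpace ℝ (Fin d), (Set.Iio R).indicator g ‖x‖ := by
    rw [← integral_indicator measurableSet_ball]
    congr 1
    ext x
    by_cases hx : ‖x‖ < R <;> simp [hx]
  have h2 : ∫ r in Set.Ioo 0 R, r ^ (d - 1) * g r =
      ∫ r in Set.Ioi (0 : ℝ), r ^ (d - 1) • (Set.Iio R).indicator g r := by
    rw [← Set.Ioi_inter_Iio, ← setIntegral_indicator measurableSet_Iio]
    congr 1
    ext r
    by_cases hr : r < R <;> simp [hr]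
  rw [h1, h2, integral_fun_norm_addHaar]
  simp only [unitSphereArea, ← measureReal_def, Measure.toSphere_real_apply_univ, smul_eq_mul,
    nsmul_eq_mul, finrank_euclideanSpace, Fintype.card_fin, mul_assoc]

/-- **Lower bound for the inner energy of radial functions (Corollary 4.2).** For `d ≥ 3`,
`a > −(d−2)²/4` and `σ = (d−2)/2 − √((d−2)²/4 + a)`, every radial `u` (with radial
profile `f`) satisfies
`∫_{|x|<R}(|∇u|² + a|u|²/|x|²) ≥ −c_d σ R^{d−2}|u(R)|² = −(σ/R)∫_{|x|=R}|u|² dS`. -/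
theorem inner_energy_lower_bound (d : ℕ) (hd : 3 ≤ d) (a : ℝ)
    (ha : -((d : ℝ) - 2) ^ 2 / 4 < a)
    (σ : ℝ) (hσ : σ = ((d : ℝ) - 2) / 2 - Real.sqrt (((d : ℝ) - 2) ^ 2 / 4 + a))
    (R : ℝ) (hR : 0 < R)
    (u : EuclideanSpace ℝ (Fin d) → ℝ) (f : ℝ → ℝ)
    (hrad : ∀ x : EuclideanSpace ℝ (Fin d), u x = f ‖x‖)
    (hu : ContDiffOn ℝ 1 u {x : EuclideanSpace ℝ (Fin d) | x ≠ 0})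
    (hint : IntegrableOn (fun x : EuclideanSpace ℝ (Fin d) =>
      ‖gradient u x‖ ^ 2 + (u x) ^ 2 / ‖x‖ ^ 2) (Metric.ball 0 R)) :
    (∫ x in Metric.ball (0 : EuclideanSpace ℝ (Fin d)) R,
        (‖gradient u x‖ ^ 2 + a * (u x) ^ 2 / ‖x‖ ^ 2))
      ≥ -(unitSphereArea d) * σ * R ^ (d - 2) * (f R) ^ 2
    ∧ -(unitSphereArea d) * σ * R ^ (d - 2) * (f R) ^ 2
      = -(σ / R) * sphereIntegral d R (fun x => (u x) ^ 2) := by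
  constructor
  · obtain ⟨m, rfl⟩ : ∃ m, d = m + 3 := ⟨d - 3, by omega⟩
    have hpos : ((m + 3 : ℕ) : ℝ) = m + 3 := by push_cast; ring
    rw [hpos] at ha hσ
    have hσ' : σ ^ 2 = (m + 1) * σ + a := by
      have := Real.sq_sqrt (show 0 ≤ ((m : ℝ) + 3 - 2) ^ 2 / 4 + a by linarith)
      rw [hσ]
      linear_combination this
    have hfin : Module.finrank ℝ (EuclideanSpace ℝ (Fin (m + 3))) - 1 = m + 2 := by simp
    have hf : ContDiffOn ℝ 1 f (Set.Ioi 0) :=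
      contDiffOn_profile hrad hu (e := EuclideanSpace.single (0 : Fin (m + 3)) (1 : ℝ)) (by simp)
    have hgrad : ∀ᵐ x : EuclideanSpace ℝ (Fin (m + 3)) ∂(volume.restrict (ball 0 R)),
        deriv f ‖x‖ ^ 2 ≤ ‖gradient u x‖ ^ 2 := by
      filter_upwards [ae_restrict_of_ae
        (Measure.ae_ne volume (0 : EuclideanSpace ℝ (Fin (m + 3))))] with x hx
      have h := abs_deriv_profile_le hrad hx
        ((hu.contDiffAt (isOpen_ne.mem_nhds hx)).differentiableAt one_ne_zero)
      rw [← sq_abs]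
      gcongr
    have hum : AEStronglyMeasurable u := by
      rw [← restrict_compl_singleton (μ := volume) (0 : EuclideanSpace ℝ (Fin (m + 3)))]
      exact hu.continuousOn.aestronglyMeasurable (measurableSet_singleton 0).compl
    have hpot : IntegrableOn (fun x : EuclideanSpace ℝ (Fin (m + 3)) => u x ^ 2 / ‖x‖ ^ 2)
        (ball 0 R) := by
      refine hint.mono' ?_ (.of_forall fun x => ?_)
      · have := hum.restrict (s := ball (0 : EuclideanSpace ℝ (Fin (m + 3))) R)
        exact ((this.aemeasurable.pow_const 2).div
          (measurable_norm.pow_const 2).aemeasurable).aestronglyMeasurable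
      · rw [Real.norm_of_nonneg (by positivity)]
        exact le_add_of_nonneg_left (by positivity)
    have hkin : IntegrableOn (fun x : EuclideanSpace ℝ (Fin (m + 3)) => ‖gradient u x‖ ^ 2)
        (ball 0 R) :=
      (hint.sub hpot).congr (.of_forall fun x => by simp)
    have hder : IntegrableOn (fun x : EuclideanSpace ℝ (Fin (m + 3)) => deriv f ‖x‖ ^ 2)
        (ball 0 R) := by
      refine hkin.mono' ?_ ?_
      · exact (((measurable_deriv f).comp measurable_norm).pow_const 2).aestronglyMeasurable
      · filter_upwards [hgrad] with x hx
        rwa [Real.norm_of_nonneg (by positivity)]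
    have hpot' : IntegrableOn (fun x : EuclideanSpace ℝ (Fin (m + 3)) => f ‖x‖ ^ 2 / ‖x‖ ^ 2)
        (ball 0 R) := by
      simpa only [hrad] using hpot
    have h1 := (integrableOn_fun_norm_addHaar (volume : Measure (EuclideanSpace ℝ (Fin (m + 3))))
      (f := fun r => deriv f r ^ 2)).1 hder
    have h2 := (integrableOn_fun_norm_addHaar (volume : Measure (EuclideanSpace ℝ (Fin (m + 3))))
      (f := fun r => f r ^ 2 / r ^ 2)).1 hpot'
    simp only [hfin, smul_eq_mul] at h1 h2
    have hradial := radial_bound m hσ' hR hf h1 h2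
    have hpolar := setIntegral_ball_fun_norm (m + 3) (by omega)
      (fun r => deriv f r ^ 2 + a * (f r ^ 2 / r ^ 2)) R
    have hmono : ∫ x in ball (0 : EuclideanSpace ℝ (Fin (m + 3))) R,
          (deriv f ‖x‖ ^ 2 + a * (f ‖x‖ ^ 2 / ‖x‖ ^ 2)) ≤
        ∫ x in ball (0 : EuclideanSpace ℝ (Fin (m + 3))) R,
          (‖gradient u x‖ ^ 2 + a * u x ^ 2 / ‖x‖ ^ 2) := by
      refine integral_mono_ae (hder.add (hpot'.const_mul a)) ?_ ?_
      · refine (hkin.add (hpot.const_mul a)).congr (.of_forall fun x => ?_)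
        simp [mul_div_assoc]
      · filter_upwards [hgrad] with x hx
        rw [hrad, mul_div_assoc]
        gcongr
    refine ge_iff_le.2 (le_trans ?_ hmono)
    rw [hpolar]
    have hc : 0 ≤ unitSphereArea (m + 3) := ENNReal.toReal_nonneg
    calc -unitSphereArea (m + 3) * σ * R ^ (m + 3 - 2) * f R ^ 2
        = unitSphereArea (m + 3) * (-σ * (R ^ (m + 1) * f R ^ 2)) := by
          rw [show m + 3 - 2 = m + 1 by omega]; ring
      _ ≤ _ := mul_le_mul_of_nonneg_left hradial hc
  · have hval : ∀ ω : sphere (0 : EuclideanSpace ℝ (Fin d)) 1,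
        u (R • (ω : EuclideanSpace ℝ (Fin d))) ^ 2 = f R ^ 2 := fun ω => by
      rw [hrad, norm_smul, norm_eq_of_mem_sphere, mul_one, Real.norm_of_nonneg hR.le]
    simp only [sphereIntegral, hval, integral_const, smul_eq_mul]
    rw [measureReal_def, ← unitSphereArea, show d - 1 = d - 2 + 1 by omega, pow_succ]
    field_simp
    ring
end
end
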